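/- Let A and B be unital complex *-algebras, both prime, with A having a nontrivial projection, and α₁,...,α₆ ∈ ℂ with ∑αₖ ≠ 0. If Φ : A → B is a bijection preserving the sum of triple products α₁ab*c + α₂acb* + α₃b*ac + α₄cab* + α₅b*ca + α₆cb*a, and Φ(1_A) is a projection of B, then Φ is either a *-ring isomorphism or a *-ring anti-isomorphism: Φ is additive, Φ(a*) = Φ(a)* for all a, and either Φ(ab) = Φ(a)Φ(b) for all a,b ∈ A or Φ(ab) = Φ(b)Φ(a) for all a,b ∈ A. -/

import Mathlib

def starTripleSum {R : Type*} [NonUnitalRing R] [Module ℂ R] [StarRing R]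
    (α1 α2 α3 α4 α5 α6 : ℂ) (a b c : R) : R :=
  α1 • (a * star b * c) + α2 • (a * c * star b) + α3 • (star b * a * c) +
  α4 • (c * a * star b) + α5 • (star b * c * a) + α6 • (c * star b * a)

/-!
Primeness of `B` forces `Φ 1 = 1`, because every value of `Φ` is a triple product
`s • Φ (s⁻¹ • w)` with `Φ 1` in the last two slots and is therefore annihilated by
`x ↦ (1 - Φ 1) * x * (1 - Φ 1)`. Setting one or two arguments equal to `1` then shows that `Φ`
commutes with the involution and preserves the product `l • (a * c) + (1 - l) • (c * a)` for a
suitable scalar `l`. Martindale's method applies to this product: pick `t` with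
`Φ t = Φ a + Φ b`, multiply by well-chosen Peirce components on which additivity is already known,
and conclude from primeness that `t = a + b`. Finally `Φ (a * a) = Φ a * Φ a`, so `Φ` is a Jordan
isomorphism and Herstein's theorem applies.
-/

/-- A prime ring: `x R y = 0` forces `x = 0` or `y = 0`. -/
class IsPrimeRing (R : Type*) [Mul R] [Zero R] : Prop where
  eq_zero_or_eq_zero {x y : R} : (∀ t, x * t * y = 0) → x = 0 ∨ y = 0

section Herstein

theorem eq_or_eq_of_forall_apply_eq_or {M N : Type*} [AddGroup M] [AddMonoid N] {f g h : M →+ N}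
    (H : ∀ a, f a = g a ∨ f a = h a) : f = g ∨ f = h := by
  have hunion : (⊤ : AddSubgroup M) ≤ f.eqLocus g ∨ (⊤ : AddSubgroup M) ≤ f.eqLocus h :=
    AddSubgroupClass.subset_union.mp fun a _ => H a
  exact hunion.imp (fun hg => AddMonoidHom.ext fun a => hg (AddSubgroup.mem_top a))
    fun hh => AddMonoidHom.ext fun a => hh (AddSubgroup.mem_top a)

variable {A B : Type*} [NonUnitalRing A] [NonUnitalRing B]

theorem eq_zero_or_eq_zero_of_forall_mul_mul_add_mul_mul_eq_zero [IsPrimeRing B]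
    (h2 : IsSMulRegular B (2 : ℕ)) {g h : B} (H : ∀ x, g * x * h + h * x * g = 0) :
    g = 0 ∨ h = 0 := by
  have swap (x : B) : h * x * g = -(g * x * h) := eq_neg_of_add_eq_zero_right (H x)
  refine IsPrimeRing.eq_zero_or_eq_zero fun x => ?_
  suffices sandwich : ∀ y, (g * x * h) * y * (g * x * h) = 0 from
    (IsPrimeRing.eq_zero_or_eq_zero sandwich).elim id id
  intro y
  have anti : (g * x * h) * y * (g * x * h) = -((g * x * h) * y * (g * x * h)) :=
    calc (g * x * h) * y * (g * x * h) = g * x * (h * y * g) * x * h := by noncomm_ring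
      _ = -(g * (x * g * y) * h) * x * h := by rw [swap]; noncomm_ring
      _ = (h * x * g) * y * (g * x * h) := by rw [← swap]; noncomm_ring
      _ = -((g * x * h) * y * (g * x * h)) := by rw [swap]; noncomm_ring
  refine h2.right_eq_zero_of_smul ?_
  rw [two_nsmul]
  exact eq_neg_iff_add_eq_zero.mp anti

variable {φ : A →+ B}

theorem map_mul_add_map_mul_of_map_mul_self (hφ : ∀ a, φ (a * a) = φ a * φ a) (a b : A) :
    φ (a * b) + φ (b * a) = φ a * φ b + φ b * φ a := by
  have hab := hφ (a + b)
  simp only [add_mul, mul_add, map_add, hφ] at hab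
  linear_combination (norm := abel) hab

theorem map_mul_mul_of_map_mul_self (h2 : IsSMulRegular B (2 : ℕ))
    (hφ : ∀ a, φ (a * a) = φ a * φ a) (a b : A) : φ (a * b * a) = φ a * φ b * φ a := by
  have jordan := map_mul_add_map_mul_of_map_mul_self hφ
  -- `2 • aba = (a(ab + ba) + (ab + ba)a) - (a²b + ba²)`
  have hnested := jordan a (a * b + b * a)
  have hsquare := jordan (a * a) b
  rw [map_add, jordan a b] at hnested
  simp only [mul_add, add_mul, map_add, hφ, ← mul_assoc] at hnested hsquare
  have htwo : (2 : ℕ) • φ (a * b * a) = (2 : ℕ) • (φ a * φ b * φ a) := by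
    linear_combination (norm := abel) hnested - hsquare
  exact h2 htwo

theorem map_mul_mul_add_of_map_mul_self (h2 : IsSMulRegular B (2 : ℕ))
    (hφ : ∀ a, φ (a * a) = φ a * φ a) (a b c : A) :
    φ (a * b * c) + φ (c * b * a) = φ a * φ b * φ c + φ c * φ b * φ a := by
  have hac := map_mul_mul_of_map_mul_self h2 hφ (a + c) b
  simp only [add_mul, mul_add, map_add, map_mul_mul_of_map_mul_self h2 hφ] at hac
  linear_combination (norm := abel) hac

theorem map_mul_eq_or_eq_swap_of_map_mul_self [IsPrimeRing B] (h2 : IsSMulRegular B (2 : ℕ))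
    (hsurj : Function.Surjective φ) (hφ : ∀ a, φ (a * a) = φ a * φ a) (a b : A) :
    φ (a * b) = φ a * φ b ∨ φ (a * b) = φ b * φ a := by
  rw [← sub_eq_zero, ← sub_eq_zero (b := φ b * φ a)]
  refine eq_zero_or_eq_zero_of_forall_mul_mul_add_mul_mul_eq_zero h2 fun y => ?_
  obtain ⟨x, rfl⟩ := hsurj y
  -- Evaluate `φ (ab x ba + ba x ab)` in two ways, the second as `φ (a(bxb)a + b(axa)b)`.
  have aba := map_mul_mul_of_map_mul_self h2 hφ
  have houter := map_mul_mul_add_of_map_mul_self h2 hφ (a * b) x (b * a)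
  have hba : φ (b * a) = φ a * φ b + φ b * φ a - φ (a * b) :=
    eq_sub_of_add_eq' (map_mul_add_map_mul_of_map_mul_self hφ a b)
  rw [show a * b * x * (b * a) = a * (b * x * b) * a by noncomm_ring,
    show b * a * x * (a * b) = b * (a * x * a) * b by noncomm_ring,
    aba, aba, aba, aba, hba] at houter
  linear_combination (norm := noncomm_ring) houter

theorem map_mul_or_map_mul_swap_of_map_mul_self [IsPrimeRing B] (h2 : IsSMulRegular B (2 : ℕ))
    (hsurj : Function.Surjective φ) (hφ : ∀ a, φ (a * a) = φ a * φ a) :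
    (∀ a b, φ (a * b) = φ a * φ b) ∨ (∀ a b, φ (a * b) = φ b * φ a) := by
  let mapMul : A →+ A →+ B := AddMonoidHom.mul.compr₂ φ
  let mulMap : A →+ A →+ B := (AddMonoidHom.mul.compl₂ φ).comp φ
  have hor : mapMul = mulMap ∨ mapMul = mulMap.flip :=
    eq_or_eq_of_forall_apply_eq_or fun a => eq_or_eq_of_forall_apply_eq_or fun b =>
      map_mul_eq_or_eq_swap_of_map_mul_self h2 hsurj hφ a b
  exact hor.imp (fun h a b => DFunLike.congr_fun (DFunLike.congr_fun h a) b)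
    fun h a b => DFunLike.congr_fun (DFunLike.congr_fun h a) b

end Herstein

section Peirce

/-- A pair of nonzero orthogonal idempotents with sum `1`, giving a two-by-two Peirce
decomposition. Idempotency follows from the other conditions. -/
structure PeircePair {R : Type*} [Ring R] (p q : R) : Prop where
  mul_eq_zero : p * q = 0
  mul_eq_zero' : q * p = 0
  add_eq_one : p + q = 1
  left_ne_zero : p ≠ 0
  right_ne_zero : q ≠ 0

/-- The element `x` lies in the Peirce component `p R q`; meant for idempotent `p` and `q`. -/
structure IsPeirce {R : Type*} [Mul R] (p q x : R) : Prop where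
  left_mul : p * x = x
  mul_right : x * q = x

theorem isPeirce_mul_mul {R : Type*} [Semigroup R] {p q : R} (hp : IsIdempotentElem p)
    (hq : IsIdempotentElem q) (x : R) : IsPeirce p q (p * x * q) :=
  ⟨by rw [← mul_assoc, ← mul_assoc, hp.eq], by rw [mul_assoc, hq.eq]⟩

theorem IsPeirce.mul {R : Type*} [Semigroup R] {p q r s x y : R} (hx : IsPeirce p q x)
    (hy : IsPeirce r s y) : IsPeirce p s (x * y) :=
  ⟨by rw [← mul_assoc, hx.left_mul], by rw [mul_assoc, hy.mul_right]⟩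

theorem IsPeirce.smul {K R : Type*} [Mul R] [SMul K R] [IsScalarTower K R R] [SMulCommClass K R R]
    {p q x : R} (hx : IsPeirce p q x) (k : K) : IsPeirce p q (k • x) :=
  ⟨by rw [mul_smul_comm, hx.left_mul], by rw [smul_mul_assoc, hx.mul_right]⟩

theorem IsPeirce.mul_eq_zero {R : Type*} [SemigroupWithZero R] {p q r s x y : R}
    (hx : IsPeirce p q x) (hqr : q * r = 0) (hy : IsPeirce r s y) : x * y = 0 := by
  rw [← hx.mul_right, ← hy.left_mul, mul_assoc, ← mul_assoc q, hqr, zero_mul, mul_zero]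

namespace PeircePair

variable {R : Type*} [Ring R] {p q : R}

theorem symm (h : PeircePair p q) : PeircePair q p :=
  ⟨h.mul_eq_zero', h.mul_eq_zero, by rw [add_comm, h.add_eq_one], h.right_ne_zero, h.left_ne_zero⟩

theorem isIdempotentElem_left (h : PeircePair p q) : IsIdempotentElem p := by
  simpa [IsIdempotentElem, mul_add, h.mul_eq_zero] using congrArg (p * ·) h.add_eq_one

theorem isPeirce_left (h : PeircePair p q) : IsPeirce p p p :=
  ⟨h.isIdempotentElem_left, h.isIdempotentElem_left⟩

theorem isPeirce_mul_mul_self (h : PeircePair p q) (x : R) : IsPeirce p p (p * x * p) :=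
  isPeirce_mul_mul h.isIdempotentElem_left h.isIdempotentElem_left x

theorem isPeirce_mul_mul (h : PeircePair p q) (x : R) : IsPeirce p q (p * x * q) :=
  _root_.isPeirce_mul_mul h.isIdempotentElem_left h.symm.isIdempotentElem_left x

theorem eq_zero_of_mul_eq_zero (h : PeircePair p q) {x : R} (hp : x * p = 0) (hq : x * q = 0) :
    x = 0 := by
  rw [← mul_one x, ← h.add_eq_one, mul_add, hp, hq, add_zero]

theorem eq_zero_of_left_mul_eq_zero (h : PeircePair p q) {x : R} (hp : p * x = 0) (hq : q * x = 0) :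
    x = 0 := by
  rw [← one_mul x, ← h.add_eq_one, add_mul, hp, hq, add_zero]

theorem eq_add_add_add (h : PeircePair p q) (x : R) :
    x = p * x * p + p * x * q + q * x * p + q * x * q :=
  calc x = (p + q) * x * (p + q) := by rw [h.add_eq_one, one_mul, mul_one]
    _ = p * x * p + p * x * q + q * x * p + q * x * q := by noncomm_ring

theorem of_isIdempotentElem {e : R} (he : IsIdempotentElem e) (h0 : e ≠ 0) (h1 : e ≠ 1) :
    PeircePair e (1 - e) :=
  ⟨he.mul_one_sub_self, he.one_sub_mul_self, add_sub_cancel e 1, h0, sub_ne_zero.mpr h1.symm⟩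

end PeircePair

end Peirce

section Mutation

variable {K R : Type*} [Field K] [Ring R] [Algebra K R]

/-- The `l`-mutation of the product of `R`, that is `l • (a * c) + (1 - l) • (c * a)`. It is the
associative product for `l = 1` and the Jordan product for `l = 1 / 2`. -/
def mutation (l : K) : R →ₗ[K] R →ₗ[K] R :=
  l • LinearMap.mul K R + (1 - l) • (LinearMap.mul K R).flip

theorem mutation_apply (l : K) (a c : R) :
    mutation l a c = l • (a * c) + (1 - l) • (c * a) :=
  rfl

theorem mutation_one_sub (l : K) (a c : R) : mutation (1 - l) a c = mutation l c a := by
  rw [mutation_apply, mutation_apply, sub_sub_cancel, add_comm]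

theorem mutation_self (l : K) (a : R) : mutation l a a = a * a := by
  rw [mutation_apply, ← add_smul, add_sub_cancel, one_smul]

theorem mutation_one (l : K) (a : R) : mutation l a 1 = a := by
  rw [mutation_apply, mul_one, one_mul, ← add_smul, add_sub_cancel, one_smul]

theorem mutation_eq_smul_mul {l : K} {a c : R} (h : c * a = 0) :
    mutation l a c = l • (a * c) := by
  rw [mutation_apply, h, smul_zero, add_zero]

theorem mutation_eq_smul_mul_swap {l : K} {a c : R} (h : a * c = 0) :
    mutation l a c = (1 - l) • (c * a) := by
  rw [mutation_apply, h, smul_zero, zero_add]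

theorem mutation_eq_zero {l : K} {a c : R} (hac : a * c = 0) (hca : c * a = 0) :
    mutation l a c = 0 := by
  rw [mutation_eq_smul_mul hca, hac, smul_zero]

theorem mul_mutation_right_mul {p : R} (hp : IsIdempotentElem p) (l : K) (d : R) :
    p * mutation l d p * p = p * d * p := by
  have hp' (x : R) : p * (p * x) = p * x := by rw [← mul_assoc, hp.eq]
  simp only [mutation_apply, mul_add, add_mul, mul_smul_comm, smul_mul_assoc, mul_assoc, hp.eq,
    hp', ← add_smul, add_sub_cancel, one_smul]

theorem mul_mutation_left_mul {p : R} (hp : IsIdempotentElem p) (l : K) (d : R) :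
    p * mutation l p d * p = p * d * p := by
  rw [← mutation_one_sub, mul_mutation_right_mul hp]

theorem mul_mutation_mul_eq_zero {p q : R} (hpq : p * q = 0) (hqp : q * p = 0) {l : K} {d : R} :
    p * mutation l q d * p = 0 := by
  have hleft : p * (q * d) * p = 0 := by rw [← mul_assoc, hpq, zero_mul, zero_mul]
  have hright : p * (d * q) * p = 0 := by rw [mul_assoc, mul_assoc, hqp, mul_zero, mul_zero]
  rw [mutation_apply, mul_add, add_mul, mul_smul_comm, mul_smul_comm, smul_mul_assoc,
    smul_mul_assoc, hleft, hright, smul_zero, smul_zero, add_zero]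

theorem mul_idem_eq_zero_of_mutation_eq_zero {l : K} [NeZero l] {p d : R} (hp : IsIdempotentElem p)
    (h : mutation l d p = 0) : d * p = 0 := by
  have corner : p * d * p = 0 := by rw [← mul_mutation_right_mul hp l, h, mul_zero, zero_mul]
  have hright : l • (d * p) = 0 := by
    simpa [mutation_apply, add_mul, mul_assoc d, hp.eq, corner] using congrArg (· * p) h
  exact (smul_eq_zero_iff_right (NeZero.ne l)).mp hright

theorem idem_mul_eq_zero_of_mutation_eq_zero {l : K} [NeZero l] {p d : R} (hp : IsIdempotentElem p)
    (h : mutation l p d = 0) : p * d = 0 := by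
  have corner : p * d * p = 0 := by rw [← mul_mutation_left_mul hp l, h, mul_zero, zero_mul]
  have hleft : l • (p * d) = 0 := by
    simpa [mutation_apply, mul_add, ← mul_assoc, hp.eq, corner] using congrArg (p * ·) h
  exact (smul_eq_zero_iff_right (NeZero.ne l)).mp hleft

namespace PeircePair

variable {l : K} {p q d : R}

theorem diagonal_eq_zero_of_mutation_eq (h : PeircePair p q)
    (hd : mutation l d p = mutation l q d) : p * d * p = 0 ∧ q * d * q = 0 := by
  constructor
  · rw [← mul_mutation_right_mul h.isIdempotentElem_left l, hd,
      mul_mutation_mul_eq_zero h.mul_eq_zero h.mul_eq_zero']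
  · rw [← mul_mutation_left_mul h.symm.isIdempotentElem_left l, ← hd, ← mutation_one_sub,
      mul_mutation_mul_eq_zero h.mul_eq_zero' h.mul_eq_zero]

variable [NeZero l] [IsPrimeRing R]

theorem mul_left_eq_zero_of_mutation (h : PeircePair p q) (hcorner : q * d * q = 0)
    (hd : ∀ y, mutation l d (p * y * q) * q = 0) : d * p = 0 := by
  refine (IsPrimeRing.eq_zero_or_eq_zero fun y => ?_).resolve_right h.right_ne_zero
  have hy : l • (d * (p * y * q)) = 0 := by
    have hqdq : p * y * q * d * q = 0 := by
      rw [mul_assoc (p * y), mul_assoc (p * y), hcorner, mul_zero]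
    simpa only [mutation_apply, add_mul, smul_mul_assoc, mul_assoc d,
      (h.isPeirce_mul_mul y).mul_right, hqdq, smul_zero, add_zero] using hd y
  simpa only [mul_assoc] using (smul_eq_zero_iff_right (NeZero.ne l)).mp hy

theorem left_mul_eq_zero_of_mutation (h : PeircePair p q) (hcorner : q * d * q = 0)
    (hd : ∀ y, q * mutation l (q * y * p) d = 0) : p * d = 0 := by
  refine (IsPrimeRing.eq_zero_or_eq_zero fun y => ?_).resolve_left h.right_ne_zero
  have hy : l • (q * y * p * d) = 0 := by
    have hqdq : q * (d * (q * y * p)) = 0 := by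
      simp only [← mul_assoc, hcorner, zero_mul]
    simpa only [mutation_apply, mul_add, mul_smul_comm, ← mul_assoc q (q * y * p),
      (h.symm.isPeirce_mul_mul y).left_mul, hqdq, smul_zero, add_zero] using hd y
  simpa only [mul_assoc] using (smul_eq_zero_iff_right (NeZero.ne l)).mp hy

theorem eq_zero_of_mutation (h : PeircePair p q) (hdq : d * q = 0)
    (hd : ∀ y, mutation l d (p * y * q) * q = 0) : d = 0 :=
  h.eq_zero_of_mul_eq_zero
    (h.mul_left_eq_zero_of_mutation (by rw [mul_assoc, hdq, mul_zero]) hd) hdq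

end PeircePair

end Mutation

theorem map_add_of_forall_sub_eq_zero {M N : Type*} [AddGroup M] [Add N] {f : M → N}
    (hf : Function.Surjective f) {a b : M} (h : ∀ t, f t = f a + f b → t - (a + b) = 0) :
    f (a + b) = f a + f b := by
  obtain ⟨t, ht⟩ := hf (f a + f b)
  rw [← sub_eq_zero.mp (h t ht), ht]

/-- A bijection, not assumed additive, that preserves the `l`-mutation product. -/
structure IsMutationIso {K A B : Type*} [Field K] [Ring A] [Algebra K A] [Ring B] [Algebra K B]
    (l : K) (Φ : A → B) : Prop where
  bijective : Function.Bijective Φ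
  map_mutation (a c : A) : Φ (mutation l a c) = mutation l (Φ a) (Φ c)

namespace IsMutationIso

variable {K A B : Type*} [Field K] [Ring A] [Algebra K A] [Ring B] [Algebra K B]
  {l : K} {Φ : A → B}

theorem one_sub (hΦ : IsMutationIso l Φ) : IsMutationIso (1 - l) Φ :=
  ⟨hΦ.bijective, fun a c => by rw [mutation_one_sub, mutation_one_sub, hΦ.map_mutation]⟩

theorem map_zero (hΦ : IsMutationIso l Φ) : Φ 0 = 0 := by
  obtain ⟨b, hb⟩ := hΦ.bijective.surjective 0
  simpa only [hb, _root_.map_zero, LinearMap.zero_apply] using hΦ.map_mutation 0 b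

theorem map_mutation_of_map_eq_add (hΦ : IsMutationIso l Φ) {t a b : A} (ht : Φ t = Φ a + Φ b)
    (c : A) : Φ (mutation l t c) = Φ (mutation l a c) + Φ (mutation l b c) := by
  simp only [hΦ.map_mutation, ht, LinearMap.map_add₂]

theorem mutation_sub_eq_zero (hΦ : IsMutationIso l Φ) {t a b c : A} (ht : Φ t = Φ a + Φ b)
    (hc : Φ (mutation l a c + mutation l b c) = Φ (mutation l a c) + Φ (mutation l b c)) :
    mutation l (t - (a + b)) c = 0 := by
  rw [LinearMap.map_sub₂, LinearMap.map_add₂, sub_eq_zero]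
  exact hΦ.bijective.injective ((hΦ.map_mutation_of_map_eq_add ht c).trans hc.symm)

theorem mutation_sub_left_eq_zero_of_mul_eq_zero (hΦ : IsMutationIso l Φ) {t a b c : A}
    (ht : Φ t = Φ a + Φ b) (hac : a * c = 0) (hca : c * a = 0) :
    mutation l (t - (a + b)) c = 0 :=
  hΦ.mutation_sub_eq_zero ht (by rw [mutation_eq_zero hac hca, hΦ.map_zero, zero_add, zero_add])

theorem mutation_sub_right_eq_zero_of_mul_eq_zero (hΦ : IsMutationIso l Φ) {t a b c : A}
    (ht : Φ t = Φ a + Φ b) (hac : a * c = 0) (hca : c * a = 0) :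
    mutation l c (t - (a + b)) = 0 := by
  rw [← mutation_one_sub]
  exact hΦ.one_sub.mutation_sub_left_eq_zero_of_mul_eq_zero ht hac hca

section

variable [NeZero l]

theorem sub_mul_idem_eq_zero (hΦ : IsMutationIso l Φ) {t a b p : A} (ht : Φ t = Φ a + Φ b)
    (hp : IsIdempotentElem p) (hap : a * p = 0) (hpa : p * a = 0) :
    (t - (a + b)) * p = 0 :=
  mul_idem_eq_zero_of_mutation_eq_zero hp (hΦ.mutation_sub_left_eq_zero_of_mul_eq_zero ht hap hpa)

theorem idem_mul_sub_eq_zero (hΦ : IsMutationIso l Φ) {t a b p : A} (ht : Φ t = Φ a + Φ b)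
    (hp : IsIdempotentElem p) (hap : a * p = 0) (hpa : p * a = 0) :
    p * (t - (a + b)) = 0 :=
  idem_mul_eq_zero_of_mutation_eq_zero hp (hΦ.mutation_sub_right_eq_zero_of_mul_eq_zero ht hap hpa)

variable [IsPrimeRing A] {p q : A}

theorem map_add_diagonal_lower (hΦ : IsMutationIso l Φ) (h : PeircePair p q) {a c : A}
    (ha : IsPeirce p p a) (hc : IsPeirce q p c) : Φ (a + c) = Φ a + Φ c := by
  refine map_add_of_forall_sub_eq_zero hΦ.bijective.surjective fun t ht => ?_
  have hq := h.symm.isPeirce_left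
  have hqd : q * (t - (a + c)) = 0 := hΦ.idem_mul_sub_eq_zero ht hq.left_mul
    (ha.mul_eq_zero h.mul_eq_zero hq) (hq.mul_eq_zero h.mul_eq_zero' ha)
  refine h.eq_zero_of_left_mul_eq_zero ?_ hqd
  refine h.left_mul_eq_zero_of_mutation (l := l) (by rw [hqd, zero_mul]) fun y => ?_
  have hy := h.symm.isPeirce_mul_mul y
  rw [add_comm a c, hΦ.mutation_sub_right_eq_zero_of_mul_eq_zero (ht.trans (add_comm _ _))
    (hc.mul_eq_zero h.mul_eq_zero hy) (hy.mul_eq_zero h.mul_eq_zero hc), mul_zero]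

theorem map_add_upper_lower (hΦ : IsMutationIso l Φ) (h : PeircePair p q) {b c : A}
    (hb : IsPeirce p q b) (hc : IsPeirce q p c) : Φ (b + c) = Φ b + Φ c := by
  refine map_add_of_forall_sub_eq_zero hΦ.bijective.surjective fun t ht => ?_
  have hp := h.isPeirce_left
  have hq := h.symm.isPeirce_left
  have hbc : mutation l b p = mutation l q b ∧ mutation l c p = mutation l q c := by
    constructor
    · rw [mutation_eq_smul_mul_swap (hb.mul_eq_zero h.mul_eq_zero' hp),
        mutation_eq_smul_mul_swap (hq.mul_eq_zero h.mul_eq_zero' hb), hb.left_mul, hb.mul_right]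
    · rw [mutation_eq_smul_mul (hp.mul_eq_zero h.mul_eq_zero hc),
        mutation_eq_smul_mul (hc.mul_eq_zero h.mul_eq_zero hq), hc.left_mul, hc.mul_right]
  have htpq : mutation l t p = mutation l q t := by
    apply hΦ.bijective.injective
    rw [hΦ.map_mutation_of_map_eq_add ht, hbc.1, hbc.2, ← mutation_one_sub l t,
      hΦ.one_sub.map_mutation_of_map_eq_add ht, mutation_one_sub, mutation_one_sub]
  have hd : mutation l (t - (b + c)) p = mutation l q (t - (b + c)) := by
    simp only [map_sub, map_add, LinearMap.sub_apply, LinearMap.add_apply, htpq, hbc]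
  obtain ⟨hpdp, hqdq⟩ := h.diagonal_eq_zero_of_mutation_eq hd
  refine h.eq_zero_of_mul_eq_zero (h.mul_left_eq_zero_of_mutation (l := l) hqdq fun y => ?_)
    (h.symm.mul_left_eq_zero_of_mutation (l := l) hpdp fun y => ?_)
  · have hy := h.isPeirce_mul_mul y
    rw [hΦ.mutation_sub_left_eq_zero_of_mul_eq_zero ht (hb.mul_eq_zero h.mul_eq_zero' hy)
      (hy.mul_eq_zero h.mul_eq_zero' hb), zero_mul]
  · have hy := h.symm.isPeirce_mul_mul y
    rw [add_comm b c, hΦ.mutation_sub_left_eq_zero_of_mul_eq_zero (ht.trans (add_comm _ _))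
      (hc.mul_eq_zero h.mul_eq_zero hy) (hy.mul_eq_zero h.mul_eq_zero hc), zero_mul]

theorem map_add_diagonal_offDiagonal (hΦ : IsMutationIso l Φ) (h : PeircePair p q) {a b c : A}
    (ha : IsPeirce p p a) (hb : IsPeirce p q b) (hc : IsPeirce q p c) :
    Φ (a + (b + c)) = Φ a + Φ (b + c) := by
  refine map_add_of_forall_sub_eq_zero hΦ.bijective.surjective fun t ht => ?_
  have hq := h.symm.isPeirce_left
  refine h.eq_zero_of_mutation (l := l) (hΦ.sub_mul_idem_eq_zero ht hq.left_mul
    (ha.mul_eq_zero h.mul_eq_zero hq) (hq.mul_eq_zero h.mul_eq_zero' ha)) fun y => ?_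
  have hy := h.isPeirce_mul_mul y
  set z := p * y * q
  -- Multiplying by `z` and then by `q` moves `a` into `p A q` and `b + c` into `q A q`.
  have haz : IsPeirce p q (mutation l (mutation l a z) q) := by
    have haz' := (ha.mul hy).smul l
    rw [mutation_eq_smul_mul (hy.mul_eq_zero h.mul_eq_zero' ha),
      mutation_eq_smul_mul (hq.mul_eq_zero h.mul_eq_zero' haz')]
    exact (haz'.mul hq).smul l
  have hbcz : IsPeirce q q (mutation l (mutation l (b + c) z) q) := by
    have hzc := (hy.mul hc).smul (1 - l)
    have hcz := (hc.mul hy).smul l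
    rw [LinearMap.map_add₂, mutation_eq_zero (hb.mul_eq_zero h.mul_eq_zero' hy)
      (hy.mul_eq_zero h.mul_eq_zero' hb), zero_add, mutation_apply l c z, LinearMap.map_add₂,
      mutation_eq_zero (hzc.mul_eq_zero h.mul_eq_zero hq) (hq.mul_eq_zero h.mul_eq_zero' hzc),
      add_zero, mutation_apply, hcz.mul_right, hcz.left_mul, ← add_smul, add_sub_cancel, one_smul]
    exact hcz
  have hzq := hΦ.mutation_sub_eq_zero (c := q) (hΦ.map_mutation_of_map_eq_add ht z) <| by
    rw [add_comm, add_comm (Φ _)]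
    exact hΦ.map_add_diagonal_lower h.symm hbcz haz
  rw [← LinearMap.map_add₂, ← LinearMap.map_sub₂] at hzq
  exact mul_idem_eq_zero_of_mutation_eq_zero hq.left_mul hzq

theorem map_add_diagonal_upper (hΦ : IsMutationIso l Φ) (h : PeircePair p q) {a b : A}
    (ha : IsPeirce p p a) (hb : IsPeirce p q b) : Φ (a + b) = Φ a + Φ b := by
  simpa only [add_zero] using
    hΦ.map_add_diagonal_offDiagonal h ha hb ⟨mul_zero q, zero_mul p⟩

theorem map_add_add_add (hΦ : IsMutationIso l Φ) (h : PeircePair p q) {a b c d : A}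
    (ha : IsPeirce p p a) (hb : IsPeirce p q b) (hc : IsPeirce q p c) (hd : IsPeirce q q d) :
    Φ (a + b + c + d) = Φ a + Φ b + Φ c + Φ d := by
  have hp := h.isPeirce_left
  have hq := h.symm.isPeirce_left
  have hbc : Φ (b + c) = Φ b + Φ c := hΦ.map_add_upper_lower h hb hc
  have habc : Φ (a + (b + c)) = Φ a + Φ (b + c) := hΦ.map_add_diagonal_offDiagonal h ha hb hc
  have hdcb : Φ (d + (c + b)) = Φ d + Φ (c + b) := hΦ.map_add_diagonal_offDiagonal h.symm hd hc hb
  have hsum : Φ (a + (d + (c + b))) = Φ a + Φ (d + (c + b)) := by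
    refine map_add_of_forall_sub_eq_zero hΦ.bijective.surjective fun t ht =>
      h.eq_zero_of_mul_eq_zero ?_ ?_
    · have ht' : Φ t = Φ d + Φ (a + (b + c)) := by
        rw [ht, hdcb, habc, add_comm c b, add_left_comm]
      rw [show a + (d + (c + b)) = d + (a + (b + c)) by abel]
      exact hΦ.sub_mul_idem_eq_zero ht' hp.left_mul (hd.mul_eq_zero h.mul_eq_zero' hp)
        (hp.mul_eq_zero h.mul_eq_zero hd)
    · exact hΦ.sub_mul_idem_eq_zero ht hq.left_mul (ha.mul_eq_zero h.mul_eq_zero hq)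
        (hq.mul_eq_zero h.mul_eq_zero' ha)
  rw [show a + b + c + d = a + (d + (c + b)) by abel, hsum, hdcb, add_comm c b, hbc]
  abel

theorem map_add_upper (hΦ : IsMutationIso l Φ) (h : PeircePair p q) {a b : A}
    (ha : IsPeirce p q a) (hb : IsPeirce p q b) : Φ (a + b) = Φ a + Φ b := by
  have hp := h.isPeirce_left
  have hq := h.symm.isPeirce_left
  have ha' : IsPeirce p q (l⁻¹ • a) := ha.smul l⁻¹
  have hb' : IsPeirce p q (l⁻¹ • b) := hb.smul l⁻¹
  have hpq : mutation l p q = 0 := mutation_eq_zero h.mul_eq_zero h.mul_eq_zero'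
  have hab : mutation l (l⁻¹ • a) (l⁻¹ • b) = 0 :=
    mutation_eq_zero (ha'.mul_eq_zero h.mul_eq_zero' hb') (hb'.mul_eq_zero h.mul_eq_zero' ha')
  have hpb : mutation l p (l⁻¹ • b) = b := by
    rw [mutation_eq_smul_mul (hb'.mul_eq_zero h.mul_eq_zero' hp), hb'.left_mul,
      smul_inv_smul₀ (NeZero.ne l)]
  have haq : mutation l (l⁻¹ • a) q = a := by
    rw [mutation_eq_smul_mul (hq.mul_eq_zero h.mul_eq_zero' ha'), ha'.mul_right,
      smul_inv_smul₀ (NeZero.ne l)]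
  calc Φ (a + b) = Φ (mutation l (p + l⁻¹ • a) (q + l⁻¹ • b)) := by
        simp only [map_add, LinearMap.add_apply, hpq, hab, hpb, haq, zero_add, add_zero]
    _ = mutation l (Φ p + Φ (l⁻¹ • a)) (Φ q + Φ (l⁻¹ • b)) := by
        rw [hΦ.map_mutation, hΦ.map_add_diagonal_upper h hp ha',
          hΦ.map_add_diagonal_lower h.symm hq hb']
    _ = Φ a + Φ b := by
        simp only [map_add, LinearMap.add_apply, ← hΦ.map_mutation, hpq, hab, hpb, haq,
          hΦ.map_zero, zero_add, add_zero]

theorem map_add_diagonal (hΦ : IsMutationIso l Φ) (h : PeircePair p q) {a b : A}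
    (ha : IsPeirce p p a) (hb : IsPeirce p p b) : Φ (a + b) = Φ a + Φ b := by
  refine map_add_of_forall_sub_eq_zero hΦ.bijective.surjective fun t ht => ?_
  have hq := h.symm.isPeirce_left
  refine h.eq_zero_of_mutation (l := l) (hΦ.sub_mul_idem_eq_zero ht hq.left_mul
    (ha.mul_eq_zero h.mul_eq_zero hq) (hq.mul_eq_zero h.mul_eq_zero' ha)) fun y => ?_
  have hy := h.isPeirce_mul_mul y
  have hupper {x : A} (hx : IsPeirce p p x) : IsPeirce p q (mutation l x (p * y * q)) := by
    rw [mutation_eq_smul_mul (hy.mul_eq_zero h.mul_eq_zero' hx)]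
    exact (hx.mul hy).smul l
  rw [hΦ.mutation_sub_eq_zero ht (hΦ.map_add_upper h (hupper ha) (hupper hb)), zero_mul]

theorem map_eq_add_add_add (hΦ : IsMutationIso l Φ) (h : PeircePair p q) (x : A) :
    Φ x = Φ (p * x * p) + Φ (p * x * q) + Φ (q * x * p) + Φ (q * x * q) := by
  rw [← hΦ.map_add_add_add h (h.isPeirce_mul_mul_self x) (h.isPeirce_mul_mul x)
    (h.symm.isPeirce_mul_mul x) (h.symm.isPeirce_mul_mul_self x), ← h.eq_add_add_add x]

end

theorem map_add [IsPrimeRing A] (hΦ : IsMutationIso l Φ) {p q : A} (h : PeircePair p q) (a b : A) :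
    Φ (a + b) = Φ a + Φ b := by
  wlog hl : l ≠ 0 generalizing l
  · exact this hΦ.one_sub (by simp [not_not.mp hl])
  have : NeZero l := ⟨hl⟩
  rw [hΦ.map_eq_add_add_add h (a + b), hΦ.map_eq_add_add_add h a, hΦ.map_eq_add_add_add h b]
  simp only [mul_add, add_mul]
  rw [hΦ.map_add_diagonal h (h.isPeirce_mul_mul_self a) (h.isPeirce_mul_mul_self b),
    hΦ.map_add_upper h (h.isPeirce_mul_mul a) (h.isPeirce_mul_mul b),
    hΦ.map_add_upper h.symm (h.symm.isPeirce_mul_mul a) (h.symm.isPeirce_mul_mul b),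
    hΦ.map_add_diagonal h.symm (h.symm.isPeirce_mul_mul_self a) (h.symm.isPeirce_mul_mul_self b)]
  abel

end IsMutationIso

section StarTriple

variable {K R : Type*} [Field K] [Ring R] [Algebra K R] [StarRing R]

/-- `starTripleSum` over an arbitrary field; `α 0, …, α 5` are the coefficients `α₁, …, α₆`. -/
def starTriple (α : Fin 6 → K) (a b c : R) : R :=
  α 0 • (a * star b * c) + α 1 • (a * c * star b) + α 2 • (star b * a * c) +
  α 3 • (c * a * star b) + α 4 • (star b * c * a) + α 5 • (c * star b * a)

theorem starTriple_one_middle {α : Fin 6 → K} (hα : ∑ i, α i ≠ 0) (a c : R) :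
    starTriple α a 1 c = (∑ i, α i) • mutation ((α 0 + α 1 + α 2) / ∑ i, α i) a c := by
  rw [mutation_apply, smul_add, smul_smul, smul_smul, mul_sub, mul_div_cancel₀ _ hα, mul_one,
    show ∑ i, α i - (α 0 + α 1 + α 2) = α 3 + α 4 + α 5 by rw [Fin.sum_univ_six]; ring]
  simp only [starTriple, star_one, mul_one, one_mul, add_smul]
  abel

theorem starTriple_one_left_right (α : Fin 6 → K) (b : R) :
    starTriple α 1 b 1 = (∑ i, α i) • star b := by
  simp only [starTriple, mul_one, one_mul, Fin.sum_univ_six, add_smul]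

theorem one_sub_mul_starTriple_mul_one_sub (α : Fin 6 → K) {p : R} (hp : IsStarProjection p)
    (a : R) : (1 - p) * starTriple α a p p * (1 - p) = 0 := by
  have hidem := hp.isIdempotentElem
  have hleft (x : R) : (1 - p) * (p * x) = 0 := by
    rw [← mul_assoc, hidem.one_sub_mul_self, zero_mul]
  simp only [starTriple, hp.isSelfAdjoint.star_eq, mul_add, add_mul, mul_smul_comm, smul_mul_assoc,
    mul_assoc, hidem.mul_one_sub_self, hleft, mul_zero, smul_zero, add_zero]

end StarTriple

/-- The map `Φ` preserves the sum of triple products with coefficients `α`. -/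
def PreservesStarTriple {K A B : Type*} [Field K] [Ring A] [Algebra K A] [StarRing A]
    [Ring B] [Algebra K B] [StarRing B] (α : Fin 6 → K) (Φ : A → B) : Prop :=
  ∀ a b c, Φ (starTriple α a b c) = starTriple α (Φ a) (Φ b) (Φ c)

namespace PreservesStarTriple

variable {K A B : Type*} [Field K] [Ring A] [Algebra K A] [StarRing A]
  [Ring B] [Algebra K B] [StarRing B] {α : Fin 6 → K} {Φ : A → B}

theorem map_one [IsPrimeRing B] (hΦ : PreservesStarTriple α Φ) (hα : ∑ i, α i ≠ 0)
    (hsurj : Function.Surjective Φ) (hproj : IsStarProjection (Φ 1)) : Φ 1 = 1 := by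
  have sandwich (y : B) : (1 - Φ 1) * y * (1 - Φ 1) = 0 := by
    obtain ⟨w, rfl⟩ := hsurj y
    have hw : Φ w = starTriple α (Φ ((∑ i, α i)⁻¹ • w)) (Φ 1) (Φ 1) := by
      rw [← hΦ, starTriple_one_middle hα, mutation_one, smul_inv_smul₀ hα]
    rw [hw, one_sub_mul_starTriple_mul_one_sub α hproj]
  have hzero : 1 - Φ 1 = 0 := (IsPrimeRing.eq_zero_or_eq_zero sandwich).elim id id
  exact (sub_eq_zero.mp hzero).symm

theorem map_sum_smul (hΦ : PreservesStarTriple α Φ) (hα : ∑ i, α i ≠ 0) (h1 : Φ 1 = 1) (a : A) :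
    Φ ((∑ i, α i) • a) = (∑ i, α i) • Φ a := by
  simpa only [starTriple_one_middle hα, h1, mutation_one] using hΦ a 1 1

theorem map_star (hΦ : PreservesStarTriple α Φ) (hα : ∑ i, α i ≠ 0) (h1 : Φ 1 = 1) (a : A) :
    Φ (star a) = star (Φ a) := by
  have h := hΦ 1 a 1
  rw [h1, starTriple_one_left_right, starTriple_one_left_right, hΦ.map_sum_smul hα h1] at h
  exact smul_right_injective B hα h

theorem map_mutation (hΦ : PreservesStarTriple α Φ) (hα : ∑ i, α i ≠ 0) (h1 : Φ 1 = 1) (a c : A) :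
    Φ (mutation ((α 0 + α 1 + α 2) / ∑ i, α i) a c) =
      mutation ((α 0 + α 1 + α 2) / ∑ i, α i) (Φ a) (Φ c) := by
  have h := hΦ a 1 c
  rw [h1, starTriple_one_middle hα, starTriple_one_middle hα, hΦ.map_sum_smul hα h1] at h
  exact smul_right_injective B hα h

end PreservesStarTriple

theorem isSMulRegular_two (K M : Type*) [Field K] [NeZero (2 : K)] [AddCommGroup M] [Module K M] :
    IsSMulRegular M (2 : ℕ) := by
  intro x y hxy
  simp only [← Nat.cast_smul_eq_nsmul K, Nat.cast_ofNat] at hxy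
  exact smul_right_injective M (two_ne_zero (α := K)) hxy

theorem stmt12_general {K A B : Type*} [Field K] [NeZero (2 : K)]
    [Ring A] [Algebra K A] [StarRing A] [IsPrimeRing A]
    [Ring B] [Algebra K B] [StarRing B] [IsPrimeRing B]
    {α : Fin 6 → K} (hα : ∑ i, α i ≠ 0)
    {e : A} (he : IsIdempotentElem e) (he0 : e ≠ 0) (he1 : e ≠ 1)
    {Φ : A → B} (hbij : Function.Bijective Φ) (hΦ : PreservesStarTriple α Φ)
    (hproj : IsStarProjection (Φ 1)) :
    (∀ a b : A, Φ (a + b) = Φ a + Φ b) ∧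
    (∀ a : A, Φ (star a) = star (Φ a)) ∧
    ((∀ a b : A, Φ (a * b) = Φ a * Φ b) ∨ (∀ a b : A, Φ (a * b) = Φ b * Φ a)) := by
  have h1 : Φ 1 = 1 := hΦ.map_one hα hbij.surjective hproj
  have hmut : IsMutationIso ((α 0 + α 1 + α 2) / ∑ i, α i) Φ := ⟨hbij, hΦ.map_mutation hα h1⟩
  have hadd : ∀ a b, Φ (a + b) = Φ a + Φ b := hmut.map_add (.of_isIdempotentElem he he0 he1)
  have hsq (a : A) : Φ (a * a) = Φ a * Φ a := by
    rw [← mutation_self ((α 0 + α 1 + α 2) / ∑ i, α i), hmut.map_mutation, mutation_self]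
  exact ⟨hadd, hΦ.map_star hα h1, map_mul_or_map_mul_swap_of_map_mul_self
    (φ := AddMonoidHom.mk' Φ hadd) (isSMulRegular_two K B) hbij.surjective hsq⟩

theorem stmt12 {A B : Type*} [Ring A] [Algebra ℂ A] [StarRing A]
    [Ring B] [Algebra ℂ B] [StarRing B]
    (α1 α2 α3 α4 α5 α6 : ℂ)
    (hsum : α1 + α2 + α3 + α4 + α5 + α6 ≠ 0)
    (hprime : ∀ x y : A, (∀ t : A, x * t * y = 0) → x = 0 ∨ y = 0)
    (e : A) (hestar : star e = e) (heidem : e * e = e) (he0 : e ≠ 0) (he1 : e ≠ 1)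
    (Φ : A → B) (hbij : Function.Bijective Φ)
    (hBprime : ∀ x y : B, (∀ t : B, x * t * y = 0) → x = 0 ∨ y = 0)
    (hΦ : ∀ a b c : A, Φ (starTripleSum α1 α2 α3 α4 α5 α6 a b c) =
      starTripleSum α1 α2 α3 α4 α5 α6 (Φ a) (Φ b) (Φ c))
    (hp1 : star (Φ 1) = Φ 1) (hp2 : Φ 1 * Φ 1 = Φ 1) :
    (∀ a b : A, Φ (a + b) = Φ a + Φ b) ∧
    (∀ a : A, Φ (star a) = star (Φ a)) ∧
    ((∀ a b : A, Φ (a * b) = Φ a * Φ b) ∨ (∀ a b : A, Φ (a * b) = Φ b * Φ a)) := by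
  have : IsPrimeRing A := ⟨hprime _ _⟩
  have : IsPrimeRing B := ⟨hBprime _ _⟩
  exact stmt12_general (α := ![α1, α2, α3, α4, α5, α6]) (by simpa [Fin.sum_univ_six] using hsum)
    heidem he0 he1 hbij hΦ ⟨hp2, hp1⟩
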